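/- arXiv:1808.05460 — 3 statements merged into one kernel-verified Lean document; each statement's English description precedes it below -/
import Mathlib

section
/- There exists a positive integer N such that for every integer r ≥ N, the interval [1,r] can be partitioned into exactly three pairwise disjoint MSTD subsets whose union is [1,r]. -/
open Finset Pointwise

/-- A finite set of integers is MSTD (more-sums-than-differences) if `|A+A| > |A-A|`. -/
def MSTD (A : Finset ℤ) : Prop := (A - A).card < (A + A).card

/-!
Remove from a long interval `[a, b]` a set `a + S` near its left end and a set `b - T` near its
right end. Sums of two remaining elements can only be missing near `2a` and `2b`, where they are
governed by the left end alone and by the right end alone; extreme differences always pair one end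
with the other. Whether the remaining set is MSTD is thus decided by finite computations with `S`
and `T` that do not involve the length of the interval (the fringe method of Martin and O'Bryant).
It then suffices to find `S` and `T` that are MSTD themselves and leave an MSTD set: translates of
the reflection of Conway's set and of Conway's set itself do this, costing one sum near `2b` and one
difference near each of `±(b - a)`.
-/

namespace MSTD

variable {A : Finset ℤ}

theorem vadd (hA : MSTD A) (t : ℤ) : MSTD (t +ᵥ A) := by
  have hsub : (t +ᵥ A) - (t +ᵥ A) = A - A := by
    simp only [← singleton_vadd, vadd_eq_add, add_sub_add_comm, singleton_sub_singleton, sub_self,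
      singleton_zero, zero_add]
  have hadd : (t +ᵥ A) + (t +ᵥ A) = (t + t) +ᵥ (A + A) := vadd_add_vadd_comm t A t A
  rwa [MSTD, hsub, hadd, card_vadd_finset]

theorem neg (hA : MSTD A) : MSTD (-A) := by
  rwa [MSTD, ← neg_sub', ← neg_add, card_neg, card_neg]

end MSTD

/-- The interval `[a, b]` with holes `a + S` at its left end and `b - T` at its right end. The holes
are given by their distances from the respective ends, so that they do not depend on the length of
the interval. -/
noncomputable def puncturedIcc (S T : Finset ℤ) (a b : ℤ) : Finset ℤ :=
  Icc a b \ ((a +ᵥ S) ∪ (b +ᵥ -T))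

/-- The elements of `[0, k)` that are not the sum of an element of `[0, k) \ S` and an element of
`[0, k) \ T`. For `S = T` they are the distances from `2a` (or `2b`) of the sums suppressed by
holes `S` at the end `a` (or `b`); for holes `S` and `T` at opposite ends they are the distances of
the suppressed differences from `±(b - a)`. -/
noncomputable def missingSums (k : ℤ) (S T : Finset ℤ) : Finset ℤ :=
  Ico 0 k \ (Ico 0 k \ S + Ico 0 k \ T)

section Fringe

variable {S T : Finset ℤ} {k a b x s : ℤ}

theorem mem_vadd_iff_sub_mem : x ∈ a +ᵥ S ↔ x - a ∈ S := by
  rw [← neg_vadd_mem_iff, vadd_eq_add, neg_add_eq_sub]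

theorem mem_vadd_neg_iff_sub_mem : x ∈ b +ᵥ -T ↔ b - x ∈ T := by
  rw [mem_vadd_iff_sub_mem, mem_neg', neg_sub]

theorem mem_puncturedIcc :
    x ∈ puncturedIcc S T a b ↔ (a ≤ x ∧ x ≤ b) ∧ x - a ∉ S ∧ b - x ∉ T := by
  rw [puncturedIcc, mem_sdiff, mem_Icc, mem_union, not_or, mem_vadd_iff_sub_mem,
    mem_vadd_neg_iff_sub_mem]

theorem disjoint_vadd_vadd_neg (hS : S ⊆ Ico 0 k) (hT : T ⊆ Ico 0 k) (hk : 2 * k ≤ b - a + 1) :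
    Disjoint (a +ᵥ S) (b +ᵥ -T) := by
  refine disjoint_left.2 fun x hx hx' => ?_
  have hleft := mem_Ico.1 (hS (mem_vadd_iff_sub_mem.1 hx))
  have hright := mem_Ico.1 (hT (mem_vadd_neg_iff_sub_mem.1 hx'))
  omega

theorem vadd_union_vadd_neg_subset_Icc (hS : S ⊆ Ico 0 k) (hT : T ⊆ Ico 0 k)
    (hk : k ≤ b - a + 1) : (a +ᵥ S) ∪ (b +ᵥ -T) ⊆ Icc a b := by
  refine union_subset (fun x hx => ?_) fun x hx => ?_
  · have hleft := mem_Ico.1 (hS (mem_vadd_iff_sub_mem.1 hx))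
    exact mem_Icc.2 (by omega)
  · have hright := mem_Ico.1 (hT (mem_vadd_neg_iff_sub_mem.1 hx))
    exact mem_Icc.2 (by omega)

theorem card_puncturedIcc_add (hS : S ⊆ Ico 0 k) (hT : T ⊆ Ico 0 k) (hk₀ : 0 ≤ k)
    (hk : 2 * k ≤ b - a + 1) :
    #(puncturedIcc S T a b) + (#S + #T) = (b - a + 1).toNat := by
  have hcard := card_sdiff_add_card_eq_card
    (vadd_union_vadd_neg_subset_Icc hS hT (a := a) (b := b) (by omega))
  rw [card_union_of_disjoint (disjoint_vadd_vadd_neg hS hT hk), card_vadd_finset,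
    card_vadd_finset, card_neg, Int.card_Icc, add_sub_right_comm] at hcard
  exact hcard

theorem add_mem_puncturedIcc (hT : T ⊆ Ico 0 k) (hk : 2 * k ≤ b - a + 1)
    (hx : x ∈ Ico 0 k \ S) : a + x ∈ puncturedIcc S T a b := by
  obtain ⟨hxk, hxS⟩ := mem_sdiff.1 hx
  rw [mem_Ico] at hxk
  refine mem_puncturedIcc.2 ⟨by omega, by rwa [add_sub_cancel_left], fun hxT => ?_⟩
  have hright := mem_Ico.1 (hT hxT)
  omega

theorem sub_mem_puncturedIcc (hS : S ⊆ Ico 0 k) (hk : 2 * k ≤ b - a + 1)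
    (hx : x ∈ Ico 0 k \ T) : b - x ∈ puncturedIcc S T a b := by
  obtain ⟨hxk, hxT⟩ := mem_sdiff.1 hx
  rw [mem_Ico] at hxk
  refine mem_puncturedIcc.2 ⟨by omega, fun hxS => ?_, by rwa [sub_sub_cancel]⟩
  have hleft := mem_Ico.1 (hS hxS)
  omega

theorem Icc_subset_puncturedIcc (hS : S ⊆ Ico 0 k) (hT : T ⊆ Ico 0 k) (hk : 0 ≤ k) :
    Icc (a + k) (b - k) ⊆ puncturedIcc S T a b := by
  intro x hx
  rw [mem_Icc] at hx
  refine mem_puncturedIcc.2 ⟨by omega, fun hxS => ?_, fun hxT => ?_⟩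
  · have hleft := mem_Ico.1 (hS hxS)
    omega
  · have hright := mem_Ico.1 (hT hxT)
    omega

theorem Icc_add_subset_add_self {A : Finset ℤ} {u v : ℤ} (ha : a ∈ A) (hb : b ∈ A)
    (hA : Icc u v ⊆ A) (hau : 2 * u ≤ a + v + 1) (hbv : b + u ≤ 2 * v + 1) :
    Icc (a + u) (b + v) ⊆ A + A := by
  intro s hs
  rw [mem_Icc] at hs
  suffices ∃ x ∈ A, s - x ∈ A by
    obtain ⟨x, hx, hsx⟩ := this
    exact mem_add.2 ⟨x, hx, s - x, hsx, add_sub_cancel x s⟩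
  rcases le_or_gt s (a + v) with hlow | hlow
  · exact ⟨a, ha, hA (mem_Icc.2 (by omega))⟩
  rcases le_or_gt s (2 * v) with hmid | hmid
  · exact ⟨s / 2, hA (mem_Icc.2 (by omega)), hA (mem_Icc.2 (by omega))⟩
  · exact ⟨b, hb, hA (mem_Icc.2 (by omega))⟩

theorem exists_add_eq_of_notMem_missingSums (hs : s ∉ missingSums k S T) (hsk : s ∈ Ico 0 k) :
    ∃ x ∈ Ico 0 k \ S, ∃ y ∈ Ico 0 k \ T, x + y = s := by
  rw [missingSums, mem_sdiff, not_and_not_right] at hs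
  exact mem_add.1 (hs hsk)

theorem add_notMem_missingSums {y : ℤ} (hx : 0 ≤ x) (hxS : x ∉ S) (hy : 0 ≤ y) (hyT : y ∉ T) :
    x + y ∉ missingSums k S T := by
  rw [missingSums, mem_sdiff, not_and_not_right, mem_Ico]
  rintro ⟨-, hxy⟩
  exact add_mem_add (mem_sdiff.2 ⟨mem_Ico.2 (by omega), hxS⟩)
    (mem_sdiff.2 ⟨mem_Ico.2 (by omega), hyT⟩)

theorem puncturedIcc_subset_add_self (hS : S ⊆ Ico 0 k) (hT : T ⊆ Ico 0 k) (hS₀ : 0 ∉ S)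
    (hT₀ : 0 ∉ T) (hk₀ : 0 < k) (hk : 3 * k ≤ b - a + 1) :
    puncturedIcc (missingSums k S S) (missingSums k T T) (2 * a) (2 * b) ⊆
      puncturedIcc S T a b + puncturedIcc S T a b := by
  intro s hs
  obtain ⟨hsIcc, hsS, hsT⟩ := mem_puncturedIcc.1 hs
  have hk₂ : 2 * k ≤ b - a + 1 := by omega
  rcases lt_or_ge s (2 * a + k) with hlow | hlow
  · obtain ⟨x, hx, y, hy, hxy⟩ :=
      exists_add_eq_of_notMem_missingSums hsS (mem_Ico.2 (by omega))
    exact mem_add.2 ⟨a + x, add_mem_puncturedIcc hT hk₂ hx, a + y,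
      add_mem_puncturedIcc hT hk₂ hy, by omega⟩
  rcases lt_or_ge (2 * b - k) s with hhigh | hhigh
  · obtain ⟨x, hx, y, hy, hxy⟩ :=
      exists_add_eq_of_notMem_missingSums hsT (mem_Ico.2 (by omega))
    exact mem_add.2 ⟨b - x, sub_mem_puncturedIcc hS hk₂ hx, b - y,
      sub_mem_puncturedIcc hS hk₂ hy, by omega⟩
  have hzero : (0 : ℤ) ∈ Ico 0 k := left_mem_Ico.2 hk₀
  have ha : a ∈ puncturedIcc S T a b := by
    simpa only [add_zero] using add_mem_puncturedIcc hT hk₂ (mem_sdiff.2 ⟨hzero, hS₀⟩)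
  have hb : b ∈ puncturedIcc S T a b := by
    simpa only [sub_zero] using sub_mem_puncturedIcc hS hk₂ (mem_sdiff.2 ⟨hzero, hT₀⟩)
  exact Icc_add_subset_add_self ha hb (Icc_subset_puncturedIcc hS hT hk₀.le) (by omega)
    (by omega) (mem_Icc.2 (by omega))

theorem sub_self_subset_puncturedIcc :
    puncturedIcc S T a b - puncturedIcc S T a b ⊆
      puncturedIcc (missingSums k S T) (missingSums k S T) (a - b) (b - a) := by
  intro d hd
  obtain ⟨x, hx, y, hy, rfl⟩ := mem_sub.1 hd
  obtain ⟨hxIcc, hxS, hxT⟩ := mem_puncturedIcc.1 hx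
  obtain ⟨hyIcc, hyS, hyT⟩ := mem_puncturedIcc.1 hy
  refine mem_puncturedIcc.2 ⟨by omega, ?_, ?_⟩
  · rw [show x - y - (a - b) = (x - a) + (b - y) by ring]
    exact add_notMem_missingSums (by omega) hxS (by omega) hyT
  · rw [show b - a - (x - y) = (y - a) + (b - x) by ring]
    exact add_notMem_missingSums (by omega) hyS (by omega) hxT

theorem mstd_puncturedIcc (hS : S ⊆ Ico 0 k) (hT : T ⊆ Ico 0 k) (hS₀ : 0 ∉ S) (hT₀ : 0 ∉ T)
    (hk : 3 * k ≤ b - a + 1)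
    (hmissing : #(missingSums k S S) + #(missingSums k T T) < 2 * #(missingSums k S T)) :
    MSTD (puncturedIcc S T a b) := by
  have hk₀ : 0 < k := by
    obtain ⟨x, hx⟩ : (missingSums k S T).Nonempty := card_pos.1 (by omega)
    have hxk := mem_Ico.1 (sdiff_subset hx)
    omega
  have hsums := card_le_card (puncturedIcc_subset_add_self hS hT hS₀ hT₀ hk₀ hk)
  have hdiffs := card_le_card (sub_self_subset_puncturedIcc (S := S) (T := T) (k := k)
    (a := a) (b := b))
  have hsumsCard : #(puncturedIcc (missingSums k S S) (missingSums k T T) (2 * a) (2 * b)) +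
      (#(missingSums k S S) + #(missingSums k T T)) = (2 * b - 2 * a + 1).toNat :=
    card_puncturedIcc_add sdiff_subset sdiff_subset hk₀.le (by omega)
  have hdiffsCard : #(puncturedIcc (missingSums k S T) (missingSums k S T) (a - b) (b - a)) +
      (#(missingSums k S T) + #(missingSums k S T)) = (b - a - (a - b) + 1).toNat :=
    card_puncturedIcc_add sdiff_subset sdiff_subset hk₀.le (by omega)
  rw [MSTD]
  omega

end Fringe

/-- Conway's MSTD set. -/
def conwaySet : Finset ℤ := {0, 2, 3, 4, 7, 11, 12, 14}

theorem mstd_conwaySet : MSTD conwaySet := by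
  rw [MSTD]
  decide +kernel

/-- The holes at the left end, as distances from that end. -/
def leftHoles : Finset ℤ := (17 : ℤ) +ᵥ -conwaySet

/-- The holes at the right end, as distances from that end. The offsets `17` and `2` are chosen so
that the holes suppress no sum at the left end, one sum at the right end, and one difference at
each extreme. -/
def rightHoles : Finset ℤ := (2 : ℤ) +ᵥ conwaySet

theorem leftHoles_subset_Ico : leftHoles ⊆ Ico 0 18 := by decide +kernel

theorem rightHoles_subset_Ico : rightHoles ⊆ Ico 0 18 := by decide +kernel

theorem missingSums_leftHoles : missingSums 18 leftHoles leftHoles = ∅ := by decide +kernel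

theorem missingSums_rightHoles : missingSums 18 rightHoles rightHoles = {5} := by decide +kernel

theorem missingSums_leftHoles_rightHoles : missingSums 18 leftHoles rightHoles = {6} := by
  decide +kernel

theorem mstd_puncturedIcc_holes {a b : ℤ} (hab : 54 ≤ b - a + 1) :
    MSTD (puncturedIcc leftHoles rightHoles a b) := by
  refine mstd_puncturedIcc leftHoles_subset_Ico rightHoles_subset_Ico (by decide +kernel)
    (by decide +kernel) (by omega) ?_
  rw [missingSums_leftHoles, missingSums_rightHoles, missingSums_leftHoles_rightHoles]
  decide

theorem stmt7 : ∃ N : ℕ, 0 < N ∧ ∀ r : ℤ, (N : ℤ) ≤ r →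
    ∃ A B C : Finset ℤ, MSTD A ∧ MSTD B ∧ MSTD C ∧
      Disjoint A B ∧ Disjoint A C ∧ Disjoint B C ∧
      A ∪ B ∪ C = Finset.Icc 1 r := by
  refine ⟨54, by norm_num, fun r hr => ?_⟩
  have hr' : 54 ≤ r - 1 + 1 := by omega
  have hleft : MSTD ((1 : ℤ) +ᵥ leftHoles) := (mstd_conwaySet.neg.vadd 17).vadd 1
  have hright : MSTD (r +ᵥ -rightHoles) := (mstd_conwaySet.vadd 2).neg.vadd r
  refine ⟨_, _, _, hleft, hright, mstd_puncturedIcc_holes hr', ?_, ?_, ?_, ?_⟩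
  · exact disjoint_vadd_vadd_neg leftHoles_subset_Ico rightHoles_subset_Ico (by omega)
  · exact disjoint_sdiff.mono_left subset_union_left
  · exact disjoint_sdiff.mono_left subset_union_right
  · exact union_sdiff_of_subset <| vadd_union_vadd_neg_subset_Icc leftHoles_subset_Ico
      rightHoles_subset_Ico (by omega)
end

section
/- Let L = {1,3,4,8,9,10,11}, and for an integer r let R_r = {r−10, r−9, r−8, r−7, r−5, r−2, r−1, r} and K_r = {ℓ ∈ ℤ : 12 ≤ ℓ ≤ r−11 and ℓ is even} ∪ {r−11}. There exists a positive integer N such that for every integer r ≥ N and every subset T of [12, r−11] \ K_r, the set L ∪ K_r ∪ T ∪ R_r is MSTD. -/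
/-!
Let `A ⊆ [1, r]` consist of the two fringes and of a middle part of `[12, r - 11]` that contains
every even integer there. Each pair of differences `±d` missing from `[1 - r, r - 1]` costs two,
so one such pair outweighs a single missing sum.

* `A - A` misses `±(r - 7)`: a difference `r - 7` needs its smaller term in `{1, 3, 4}`, hence its
  larger term in `{r - 6, r - 4, r - 3}`, which is disjoint from `A`.
* `A + A` contains all of `[2, 2r]` except possibly `3`. The sums near the ends and around `r` come
  from the fringes alone; for the remaining ones, add an even element of the middle to one of two
  consecutive elements of a fringe (`10, 11` or `r - 10, r - 9`), chosen by parity.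
-/

open Finset Pointwise

lemma neg_mem_sub_self_iff {G : Type*} [SubtractionMonoid G] [DecidableEq G] {B : Finset G}
    {x : G} : -x ∈ B - B ↔ x ∈ B - B := by
  rw [← mem_neg', neg_sub]

lemma sub_subset_Icc {G : Type*} [AddCommGroup G] [PartialOrder G] [IsOrderedAddMonoid G]
    [LocallyFiniteOrder G] [DecidableEq G] {A B : Finset G} {a b c d : G}
    (hA : A ⊆ Icc a b) (hB : B ⊆ Icc c d) : A - B ⊆ Icc (a - d) (b - c) := by
  refine sub_subset_iff.2 fun x hx y hy => ?_
  have hx' := mem_Icc.1 (hA hx)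
  have hy' := mem_Icc.1 (hB hy)
  exact mem_Icc.2 ⟨sub_le_sub hx'.1 hy'.2, sub_le_sub hx'.2 hy'.1⟩

section Criterion

variable {A : Finset ℤ} {m n d s : ℤ}

lemma card_sub_self_le_of_notMem (hA : A ⊆ Icc m n) (hd : 0 < d) (hdn : d ≤ n - m)
    (hdA : d ∉ A - A) : ((A - A).card : ℤ) ≤ 2 * (n - m) - 1 := by
  have hsub : A - A ⊆ ((Icc (m - n) (n - m)).erase d).erase (-d) :=
    subset_erase.2 ⟨subset_erase.2 ⟨sub_subset_Icc hA hA, hdA⟩, neg_mem_sub_self_iff.not.2 hdA⟩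
  have hcard := card_le_card hsub
  rw [card_erase_of_mem (by simp only [mem_erase, mem_Icc]; omega),
    card_erase_of_mem (by simp only [mem_Icc]; omega), Int.card_Icc] at hcard
  omega

lemma le_card_of_Icc_erase_subset (h : (Icc m n).erase s ⊆ A) : n - m ≤ A.card := by
  have hcard := pred_card_le_card_erase.trans (card_le_card h)
  rw [Int.card_Icc] at hcard
  omega

lemma mstd_of_notMem_sub_of_Icc_erase_subset_add (hA : A ⊆ Icc m n) (hd : 0 < d)
    (hdn : d ≤ n - m) (hdA : d ∉ A - A) (hs : (Icc (2 * m) (2 * n)).erase s ⊆ A + A) :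
    MSTD A := by
  have hdiff := card_sub_self_le_of_notMem hA hd hdn hdA
  have hsum := le_card_of_Icc_erase_subset hs
  unfold MSTD
  omega

end Criterion

lemma Icc_subset_filter_even_add_pair (p q x : ℤ) :
    Icc (p + x + 1) (q + x) ⊆ (Icc p q).filter (fun ℓ => Even ℓ) + {x, x + 1} := by
  intro s hs
  rw [mem_Icc] at hs
  rcases Int.even_or_odd (s - x) with heven | hodd
  · have hmem : s - x ∈ (Icc p q).filter (fun ℓ => Even ℓ) :=
      mem_filter.2 ⟨mem_Icc.2 ⟨by omega, by omega⟩, heven⟩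
    exact mem_add.2 ⟨s - x, hmem, x, by simp, by ring⟩
  · have hmem : s - x - 1 ∈ (Icc p q).filter (fun ℓ => Even ℓ) :=
      mem_filter.2 ⟨mem_Icc.2 ⟨by omega, by omega⟩, hodd.sub_odd odd_one⟩
    exact mem_add.2 ⟨s - x - 1, hmem, x + 1, by simp, by ring⟩

/-- The elements below `12` of the sets under consideration: the set `L` of the paper. -/
def leftFringe : Finset ℤ := {1, 3, 4, 8, 9, 10, 11}

/-- The elements above `r - 11` of the sets under consideration: the set `R_r` of the paper. -/
def rightFringe (r : ℤ) : Finset ℤ := {r - 10, r - 9, r - 8, r - 7, r - 5, r - 2, r - 1, r}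

/-- The set with middle part `M`, meant to lie in `[12, r - 11]`, between the two fringes. The
paper's `L ∪ K_r ∪ T ∪ R_r` is the case `M = K_r ∪ T`. -/
def withFringes (r : ℤ) (M : Finset ℤ) : Finset ℤ := leftFringe ∪ M ∪ rightFringe r

section Fringes

variable {r x : ℤ} {M : Finset ℤ}

lemma leftFringe_subset_withFringes : leftFringe ⊆ withFringes r M :=
  subset_union_left.trans subset_union_left

lemma subset_withFringes : M ⊆ withFringes r M :=
  subset_union_right.trans subset_union_left

lemma rightFringe_subset_withFringes : rightFringe r ⊆ withFringes r M :=
  subset_union_right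

lemma mem_rightFringe_iff_sub_mem : x ∈ rightFringe r ↔ x - r ∈ rightFringe 0 := by
  simp only [rightFringe, mem_insert, mem_singleton]
  omega

lemma Icc_erase_three_subset_leftFringe_add_leftFringe :
    (Icc 2 22).erase 3 ⊆ leftFringe + leftFringe := by
  decide

lemma Icc_subset_leftFringe_add_rightFringe (r : ℤ) :
    Icc r (r + 2) ⊆ leftFringe + rightFringe r := by
  have hzero : Icc 0 2 ⊆ leftFringe + rightFringe 0 := by decide
  intro s hs
  rw [mem_Icc] at hs
  have hs' : s - r ∈ Icc 0 2 := mem_Icc.2 ⟨by omega, by omega⟩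
  obtain ⟨a, ha, b, hb, hab⟩ := mem_add.1 (hzero hs')
  exact mem_add.2 ⟨a, ha, b + r, mem_rightFringe_iff_sub_mem.2 (by simpa using hb), by omega⟩

lemma Icc_subset_rightFringe_add_rightFringe (r : ℤ) :
    Icc (2 * r - 20) (2 * r) ⊆ rightFringe r + rightFringe r := by
  have hzero : Icc (-20) 0 ⊆ rightFringe 0 + rightFringe 0 := by decide
  intro s hs
  rw [mem_Icc] at hs
  have hs' : s - 2 * r ∈ Icc (-20) 0 := mem_Icc.2 ⟨by omega, by omega⟩
  obtain ⟨a, ha, b, hb, hab⟩ := mem_add.1 (hzero hs')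
  exact mem_add.2 ⟨a + r, mem_rightFringe_iff_sub_mem.2 (by simpa using ha),
    b + r, mem_rightFringe_iff_sub_mem.2 (by simpa using hb), by omega⟩

lemma Icc_erase_three_subset_withFringes_add_withFringes
    (hM : (Icc 12 (r - 11)).filter (fun ℓ => Even ℓ) ⊆ M) :
    (Icc 2 (2 * r)).erase 3 ⊆ withFringes r M + withFringes r M := by
  have hL : leftFringe ⊆ withFringes r M := leftFringe_subset_withFringes
  have hR : rightFringe r ⊆ withFringes r M := rightFringe_subset_withFringes
  have hE := hM.trans (subset_withFringes (r := r))
  have hpairL : ({10, 10 + 1} : Finset ℤ) ⊆ leftFringe := by decide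
  have hpairR : ({r - 10, r - 10 + 1} : Finset ℤ) ⊆ rightFringe r := by
    intro x hx
    simp only [rightFringe, mem_insert, mem_singleton] at hx ⊢
    omega
  intro s hs
  obtain ⟨hs3, hs⟩ := mem_erase.1 hs
  rw [mem_Icc] at hs
  have hcases : s ≤ 22 ∨ (23 ≤ s ∧ s ≤ r - 1) ∨ (r ≤ s ∧ s ≤ r + 2) ∨
      (r + 3 ≤ s ∧ s ≤ 2 * r - 21) ∨ 2 * r - 20 ≤ s := by omega
  rcases hcases with h | h | h | h | h
  · exact add_subset_add hL hL (Icc_erase_three_subset_leftFringe_add_leftFringe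
      (mem_erase.2 ⟨hs3, mem_Icc.2 ⟨hs.1, h⟩⟩))
  · exact add_subset_add hE (hpairL.trans hL) (Icc_subset_filter_even_add_pair 12 (r - 11) 10
      (mem_Icc.2 ⟨by omega, by omega⟩))
  · exact add_subset_add hL hR (Icc_subset_leftFringe_add_rightFringe r (mem_Icc.2 h))
  · exact add_subset_add hE (hpairR.trans hR)
      (Icc_subset_filter_even_add_pair 12 (r - 11) (r - 10) (mem_Icc.2 ⟨by omega, by omega⟩))
  · exact add_subset_add hR hR (Icc_subset_rightFringe_add_rightFringe r (mem_Icc.2 ⟨h, hs.2⟩))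

lemma withFringes_subset_Icc (hr : 11 ≤ r) (hM : M ⊆ Icc 12 (r - 11)) :
    withFringes r M ⊆ Icc 1 r := by
  refine union_subset (union_subset ?_ (hM.trans (Icc_subset_Icc (by omega) (by omega)))) ?_
  all_goals
    intro x hx
    simp only [leftFringe, rightFringe, mem_insert, mem_singleton] at hx
    exact mem_Icc.2 ⟨by omega, by omega⟩

lemma mem_of_mem_withFringes_of_lt_eight (hr : 18 ≤ r) (hM : M ⊆ Icc 12 (r - 11))
    (hx : x ∈ withFringes r M) (hlt : x < 8) : x ∈ ({1, 3, 4} : Finset ℤ) := by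
  have hxM : x ∉ M := fun h => by
    have := mem_Icc.1 (hM h)
    omega
  simp only [withFringes, leftFringe, rightFringe, mem_union, mem_insert, mem_singleton, hxM,
    or_false] at hx ⊢
  omega

lemma mem_of_mem_withFringes_of_sub_seven_lt (hr : 18 ≤ r) (hM : M ⊆ Icc 12 (r - 11))
    (hx : x ∈ withFringes r M) (hlt : r - 7 < x) :
    x ∈ ({r - 5, r - 2, r - 1, r} : Finset ℤ) := by
  have hxM : x ∉ M := fun h => by
    have := mem_Icc.1 (hM h)
    omega
  simp only [withFringes, leftFringe, rightFringe, mem_union, mem_insert, mem_singleton, hxM,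
    or_false] at hx ⊢
  omega

lemma sub_seven_notMem_withFringes_sub_withFringes (hr : 18 ≤ r) (hM : M ⊆ Icc 12 (r - 11)) :
    r - 7 ∉ withFringes r M - withFringes r M := by
  intro h
  obtain ⟨a, ha, b, hb, hab⟩ := mem_sub.1 h
  have ha_le : a ≤ r := (mem_Icc.1 (withFringes_subset_Icc (by omega) hM ha)).2
  have hb_ge : 1 ≤ b := (mem_Icc.1 (withFringes_subset_Icc (by omega) hM hb)).1
  have ha_mem := mem_of_mem_withFringes_of_sub_seven_lt hr hM ha (by omega)
  have hb_mem := mem_of_mem_withFringes_of_lt_eight hr hM hb (by omega)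
  simp only [mem_insert, mem_singleton] at ha_mem hb_mem
  omega

theorem stmt15_general (hr : 18 ≤ r)
    (heven : (Icc 12 (r - 11)).filter (fun ℓ => Even ℓ) ⊆ M) (hM : M ⊆ Icc 12 (r - 11)) :
    MSTD (withFringes r M) :=
  mstd_of_notMem_sub_of_Icc_erase_subset_add (withFringes_subset_Icc (by omega) hM)
    (by omega) (by omega) (sub_seven_notMem_withFringes_sub_withFringes hr hM)
    (Icc_erase_three_subset_withFringes_add_withFringes heven)

end Fringes

theorem stmt15 (L : Finset ℤ) (hL : L = ({1, 3, 4, 8, 9, 10, 11} : Finset ℤ)) :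
    ∃ N : ℕ, 0 < N ∧ ∀ r : ℤ, (N : ℤ) ≤ r →
      ∀ K R : Finset ℤ,
        K = (Finset.Icc 12 (r - 11)).filter (fun ℓ => Even ℓ) ∪ {r - 11} →
        R = ({r - 10, r - 9, r - 8, r - 7, r - 5, r - 2, r - 1, r} : Finset ℤ) →
        ∀ T ⊆ Finset.Icc 12 (r - 11) \ K,
          MSTD (L ∪ K ∪ T ∪ R) := by
  refine ⟨23, by norm_num, fun r hr K R hK hR T hT => ?_⟩
  have heven : (Icc 12 (r - 11)).filter (fun ℓ => Even ℓ) ⊆ K := hK ▸ subset_union_left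
  have hK_sub : K ⊆ Icc 12 (r - 11) :=
    hK ▸ union_subset (filter_subset _ _) (singleton_subset_iff.2 (mem_Icc.2 ⟨by omega, le_rfl⟩))
  rw [hL, hR, union_assoc _ K T]
  exact stmt15_general (by omega) (heven.trans subset_union_left)
    (union_subset hK_sub (hT.trans sdiff_subset))
end

section
/- Fix an integer ℓ ≥ 1 and subsets L ⊆ [0, ℓ−1] and R_0 ⊆ [0, ℓ−1]. Let a be an integer with a ≥ 2 such that [ℓ, 2ℓ−a] ⊆ L + L and [a−2, ℓ−2] ⊆ R_0 + R_0, and set τ(L) = |{i ∈ L : i ≤ ℓ−a+1}| and τ(R_0) = |{i ∈ R_0 : i ≥ a−2}|. For every ε > 0 there exists r_0 such that for all integers r ≥ r_0 the following holds: writing R = {(r−ℓ) + x : x ∈ R_0} (so that [2r−2ℓ+a−2, 2r−ℓ−2] ⊆ R + R), the number of subsets M of [ℓ, r−ℓ−1] for which the set S = L ∪ M ∪ R satisfies [2ℓ−a+1, 2r−2ℓ+a−3] ⊆ S + S is at least (1 − (a−2)(2^{−τ(R_0)} + 2^{−τ(L)}) − 6(2^{−|L|} + 2^{−|R_0|}) −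 ε) · 2^{r−2ℓ}. -/
/-!
By the union bound it suffices to bound, for each `k`, the number of `M` with `k ∉ S + S`. Such an
`M` avoids every point `k - t` with `t` in a fringe, and contains no two points that are swapped by
the reflection `m ↦ k - m`. The first condition gives a factor `1 / 2` for each such point; the
second, on an interval of `j` points with no forced ones, gives `3 / 4` for each swapped pair and
`1 / 2` for the fixed point, if there is one.

For the `a - 2` smallest sums only the forced points are used, with the `τ(L)` elements `t` for
which `k - t` cannot fall into the fringe. For the next ones the whole of `L` forces points and
`j` runs over distinct natural numbers, so that the total is at most `2 ^ (-|L|)` times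
`∑ j, pairFreeDensity j = 6`. The largest sums are symmetric. For the `2 * l - 1` sums in the centre
the pairs alone suffice, because `j → ∞` as `r → ∞`.
-/

open Finset Pointwise

section IntegerIntervals

variable {x y : ℤ}

lemma sum_Icc_add_sum_Icc {N : Type*} [AddCommMonoid N] (f : ℤ → N) {y' z : ℤ}
    (hxy : x ≤ y + 1) (hyz : y ≤ z) (hy : y + 1 = y') :
    ∑ k ∈ Icc x y, f k + ∑ k ∈ Icc y' z, f k = ∑ k ∈ Icc x z, f k := by
  rw [← sum_union (disjoint_left.2 fun k => by grind)]
  congr 1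
  grind

lemma sum_Icc_le_mul {f : ℤ → ℝ} {C : ℝ} (hxy : x ≤ y + 1) (hf : ∀ k ∈ Icc x y, f k ≤ C) :
    ∑ k ∈ Icc x y, f k ≤ (y + 1 - x) * C := by
  have card_eq : (#(Icc x y) : ℝ) = y + 1 - x := by
    exact_mod_cast Int.card_Icc_of_le x y hxy
  simpa only [nsmul_eq_mul, card_eq] using sum_le_card_nsmul _ f C hf

end IntegerIntervals

section PairFreeDensity

/-- The proportion of the subsets of an interval of `j` integers that contain no two (possibly
equal) points swapped by the reflection of the interval. It is given by its recursion, which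
removes the two endpoints. -/
noncomputable def pairFreeDensity : ℕ → ℝ
  | 0 => 1
  | 1 => 1 / 2
  | j + 2 => 3 / 4 * pairFreeDensity j

lemma pairFreeDensity_nonneg (j : ℕ) : 0 ≤ pairFreeDensity j := by
  induction j using Nat.twoStepInduction with
  | zero => simp [pairFreeDensity]
  | one => simp [pairFreeDensity]
  | more j ih _ => rw [pairFreeDensity]; positivity

lemma pairFreeDensity_le_pow (j : ℕ) : pairFreeDensity j ≤ (3 / 4) ^ (j / 2) := by
  induction j using Nat.twoStepInduction with
  | zero => simp [pairFreeDensity]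
  | one => norm_num [pairFreeDensity]
  | more j ih _ =>
    rw [pairFreeDensity, Nat.add_div_right j two_pos, pow_succ']
    gcongr

lemma sum_range_pairFreeDensity (n : ℕ) :
    ∑ j ∈ range n, pairFreeDensity j =
      6 - 4 * (pairFreeDensity n + pairFreeDensity (n + 1)) := by
  induction n with
  | zero => norm_num [pairFreeDensity]
  | succ n ih =>
    rw [sum_range_succ, ih, show pairFreeDensity (n + 1 + 1) = 3 / 4 * pairFreeDensity n from rfl]
    ring

lemma sum_pairFreeDensity_le (s : Finset ℕ) : ∑ j ∈ s, pairFreeDensity j ≤ 6 := by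
  obtain ⟨n, hn⟩ := s.exists_nat_subset_range
  calc ∑ j ∈ s, pairFreeDensity j
    _ ≤ ∑ j ∈ range n, pairFreeDensity j :=
      sum_le_sum_of_subset_of_nonneg hn fun j _ _ => pairFreeDensity_nonneg j
    _ ≤ 6 := by
      linarith [sum_range_pairFreeDensity n, pairFreeDensity_nonneg n,
        pairFreeDensity_nonneg (n + 1)]

lemma sum_le_six_mul_of_le_pairFreeDensity {ι : Type*} {s : Finset ι} {f : ι → ℝ} {C : ℝ}
    {j : ι → ℕ} (hC : 0 ≤ C) (hj : Set.InjOn j s) (hf : ∀ i ∈ s, f i ≤ C * pairFreeDensity (j i)) :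
    ∑ i ∈ s, f i ≤ 6 * C :=
  calc ∑ i ∈ s, f i
    _ ≤ ∑ i ∈ s, C * pairFreeDensity (j i) := sum_le_sum hf
    _ = C * ∑ n ∈ s.image j, pairFreeDensity n := by rw [sum_image hj, mul_sum]
    _ ≤ C * 6 := by gcongr; exact sum_pairFreeDensity_le _
    _ = 6 * C := mul_comm C 6

end PairFreeDensity

section SumAvoiding

variable {G : Type*} [Add G] [DecidableEq G] {A V D M : Finset G} {k u v : G}

/-- The subsets `M` of `V` for which `k` is not a sum of two elements of `A ∪ M`. Here `A` is the
prescribed part of the set `A ∪ M` and `M` is its random part. -/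
def sumAvoiding (A V : Finset G) (k : G) : Finset (Finset G) :=
  {M ∈ V.powerset | k ∉ (A ∪ M) + (A ∪ M)}

lemma mem_sumAvoiding : M ∈ sumAvoiding A V k ↔ M ⊆ V ∧ k ∉ (A ∪ M) + (A ∪ M) := by
  rw [sumAvoiding, mem_filter, mem_powerset]

lemma add_ne_of_mem_sumAvoiding (hM : M ∈ sumAvoiding A V k) (hu : u ∈ A ∪ M) (hv : v ∈ A ∪ M) :
    u + v ≠ k :=
  fun h => (mem_sumAvoiding.1 hM).2 (h ▸ add_mem_add hu hv)

lemma card_sumAvoiding_le_two_pow (A V : Finset G) (k : G) : #(sumAvoiding A V k) ≤ 2 ^ #V :=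
  (card_filter_le _ _).trans_eq (card_powerset V)

lemma sumAvoiding_subset_sdiff (hD : ∀ d ∈ D, ∃ t ∈ insert d A, t + d = k) :
    sumAvoiding A V k ⊆ sumAvoiding A (V \ D) k := by
  intro M hM
  obtain ⟨hMV, hMk⟩ := mem_sumAvoiding.1 hM
  refine mem_sumAvoiding.2 ⟨subset_sdiff.2 ⟨hMV, disjoint_left.2 fun d hdM hdD => ?_⟩, hMk⟩
  obtain ⟨t, ht, htd⟩ := hD d hdD
  exact add_ne_of_mem_sumAvoiding hM (by grind) (mem_union_right A hdM) htd

/-- `M` meets `{u, v}` in one of the three sets `∅`, `{u}`, `{v}`. -/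
lemma card_sumAvoiding_le_three_mul (huv : u + v = k) :
    #(sumAvoiding A V k) ≤ 3 * #(sumAvoiding A (V \ {u, v}) k) := by
  refine card_le_mul_card_image_of_maps_to (f := (· \ {u, v})) (fun M hM => ?_) 3 fun N _ => ?_
  · obtain ⟨hMV, hMk⟩ := mem_sumAvoiding.1 hM
    refine mem_sumAvoiding.2 ⟨sdiff_subset_sdiff hMV subset_rfl, fun hk => hMk ?_⟩
    exact add_subset_add (union_subset_union_right sdiff_subset)
      (union_subset_union_right sdiff_subset) hk
  · have fibre_subset : {M ∈ sumAvoiding A V k | M \ {u, v} = N} ⊆ {N, insert u N, insert v N} := by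
      intro M hM
      obtain ⟨hMk, rfl⟩ := mem_filter.1 hM
      have not_both : ¬(u ∈ M ∧ v ∈ M) := fun ⟨hu, hv⟩ =>
        add_ne_of_mem_sumAvoiding hMk (mem_union_right A hu) (mem_union_right A hv) huv
      grind
    exact (card_le_card fibre_subset).trans card_le_three

lemma two_pow_card_le_card_add_sum_card_sumAvoiding (A V K : Finset G) :
    2 ^ #V ≤ #{M ∈ V.powerset | K ⊆ (A ∪ M) + (A ∪ M)} + ∑ k ∈ K, #(sumAvoiding A V k) := by
  have not_covering_subset : {M ∈ V.powerset | ¬K ⊆ (A ∪ M) + (A ∪ M)} ⊆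
      K.biUnion (sumAvoiding A V) := by
    intro M hM
    obtain ⟨hMV, hMK⟩ := mem_filter.1 hM
    obtain ⟨k, hkK, hkM⟩ := not_subset.1 hMK
    exact mem_biUnion.2 ⟨k, hkK, mem_filter.2 ⟨hMV, hkM⟩⟩
  rw [← card_powerset, ← card_filter_add_card_filter_not (fun M => K ⊆ (A ∪ M) + (A ∪ M))]
  gcongr
  exact (card_le_card not_covering_subset).trans card_biUnion_le

end SumAvoiding

section Fringes

variable {A T U V : Finset ℤ} {b c k p q : ℤ}

lemma card_sumAvoiding_le_of_Icc_subset {u v : ℤ} (hV : Icc u v ⊆ V) (j : ℕ)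
    (hj : (v - u + 1).toNat = j) :
    (#(sumAvoiding A V (u + v)) : ℝ) ≤ 2 ^ #V * pairFreeDensity j := by
  induction j using Nat.twoStepInduction generalizing V u v with
  | zero =>
    rw [pairFreeDensity, mul_one]
    exact_mod_cast card_sumAvoiding_le_two_pow A V (u + v)
  | one =>
    obtain rfl : v = u := by omega
    have card_V : #(V \ {v}) + 1 = #V := by
      simpa using card_sdiff_add_card_eq_card (singleton_subset_iff.2 (hV (by simp)))
    have card_le : #(sumAvoiding A V (v + v)) ≤ 2 ^ #(V \ {v}) :=
      (card_le_card (sumAvoiding_subset_sdiff (by simp))).trans (card_sumAvoiding_le_two_pow ..)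
    rw [pairFreeDensity, ← card_V, pow_succ]
    have : (#(sumAvoiding A V (v + v)) : ℝ) ≤ 2 ^ #(V \ {v}) := by exact_mod_cast card_le
    linarith
  | more j ih _ =>
    have huv : u < v := by omega
    have card_V : #(V \ {u, v}) + 2 = #V := by
      rw [← card_pair huv.ne]
      exact card_sdiff_add_card_eq_card fun x hx => hV (by grind)
    have inner : (#(sumAvoiding A (V \ {u, v}) (u + v)) : ℝ) ≤
        2 ^ #(V \ {u, v}) * pairFreeDensity j := by
      have := ih (V := V \ {u, v}) (u := u + 1) (v := v - 1)
        (fun x hx => by have := @hV x; grind) (by omega)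
      rwa [show u + 1 + (v - 1) = u + v by ring] at this
    have peel : (#(sumAvoiding A V (u + v)) : ℝ) ≤ 3 * #(sumAvoiding A (V \ {u, v}) (u + v)) := by
      exact_mod_cast card_sumAvoiding_le_three_mul rfl
    rw [pairFreeDensity, ← card_V, pow_add]
    linarith

lemma sumAvoiding_subset_sdiff_image_sub (hTA : T ⊆ A) :
    sumAvoiding A U k ⊆ sumAvoiding A (U \ T.image (k - ·)) k := by
  refine sumAvoiding_subset_sdiff fun d hd => ?_
  obtain ⟨t, ht, rfl⟩ := mem_image.1 hd
  exact ⟨t, mem_insert_of_mem (hTA ht), add_sub_cancel t k⟩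

lemma two_pow_card_sdiff_image_sub (hTU : T.image (k - ·) ⊆ U) :
    (2 : ℝ) ^ #(U \ T.image (k - ·)) = 2 ^ #U * 2 ^ (-(#T : ℤ)) := by
  have card_T : #(T.image (k - ·)) = #T := card_image_of_injective _ sub_right_injective
  rw [← card_sdiff_add_card_eq_card hTU, card_T, pow_add, zpow_neg, zpow_natCast,
    mul_inv_cancel_right₀ (by positivity)]

lemma card_sumAvoiding_le_of_image_sub_subset (hTA : T ⊆ A) (hTU : T.image (k - ·) ⊆ U) :
    (#(sumAvoiding A U k) : ℝ) ≤ 2 ^ #U * 2 ^ (-(#T : ℤ)) := by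
  rw [← two_pow_card_sdiff_image_sub hTU]
  exact_mod_cast (card_le_card (sumAvoiding_subset_sdiff_image_sub hTA)).trans
    (card_sumAvoiding_le_two_pow ..)

lemma card_sumAvoiding_le_of_Icc_subset_sdiff {u v : ℤ} (hTA : T ⊆ A)
    (hTU : T.image (u + v - ·) ⊆ U) (hI : Icc u v ⊆ U \ T.image (u + v - ·)) :
    (#(sumAvoiding A U (u + v)) : ℝ) ≤
      2 ^ #U * 2 ^ (-(#T : ℤ)) * pairFreeDensity (v - u + 1).toNat := by
  rw [← two_pow_card_sdiff_image_sub hTU]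
  refine le_trans ?_ (card_sumAvoiding_le_of_Icc_subset (A := A) hI _ rfl)
  exact_mod_cast card_le_card (sumAvoiding_subset_sdiff_image_sub hTA)

lemma sum_card_sumAvoiding_le_of_left_fringe (hTA : T ⊆ A) (hT : T ⊆ Icc b (p - 1)) (hb : b ≤ p) :
    ∑ k ∈ Icc (2 * p - 1) (q + b), (#(sumAvoiding A (Icc p q) k) : ℝ) ≤
      6 * (2 ^ #(Icc p q) * 2 ^ (-(#T : ℤ))) := by
  refine sum_le_six_mul_of_le_pairFreeDensity (j := fun k => (k - p - p + 1).toNat)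
    (by positivity) (fun x hx y hy hxy => by grind) fun k hk => ?_
  have := card_sumAvoiding_le_of_Icc_subset_sdiff (U := Icc p q) (u := p) (v := k - p) hTA
    (fun x hx => by grind) (fun x hx => by grind)
  rwa [add_sub_cancel] at this

lemma sum_card_sumAvoiding_le_of_right_fringe (hTA : T ⊆ A) (hT : T ⊆ Icc (q + 1) c)
    (hc : q ≤ c) :
    ∑ k ∈ Icc (p + c) (2 * q + 1), (#(sumAvoiding A (Icc p q) k) : ℝ) ≤
      6 * (2 ^ #(Icc p q) * 2 ^ (-(#T : ℤ))) := by
  refine sum_le_six_mul_of_le_pairFreeDensity (j := fun k => (q - (k - q) + 1).toNat)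
    (by positivity) (fun x hx y hy hxy => by grind) fun k hk => ?_
  have := card_sumAvoiding_le_of_Icc_subset_sdiff (U := Icc p q) (u := k - q) (v := q) hTA
    (fun x hx => by grind) (fun x hx => by grind)
  rwa [sub_add_cancel] at this

/-- The largest interval in `[p, q]` that is symmetric about `k / 2` has
`q - p + 1 - |k - (p + q)|` points. -/
lemma card_sumAvoiding_Icc_le {d : ℤ} (hk : |k - (p + q)| ≤ d) :
    (#(sumAvoiding A (Icc p q) k) : ℝ) ≤
      2 ^ #(Icc p q) * (3 / 4) ^ ((q - p + 1 - d).toNat / 2) := by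
  obtain ⟨u, v, rfl, hu, hv, hd⟩ :
      ∃ u v, u + v = k ∧ p ≤ u ∧ v ≤ q ∧ q - p + 1 - d ≤ v - u + 1 := by
    rw [abs_le] at hk
    rcases le_total k (p + q) with h | h
    · exact ⟨p, k - p, by omega, by omega, by omega, by omega⟩
    · exact ⟨k - q, q, by omega, by omega, by omega, by omega⟩
  calc (#(sumAvoiding A (Icc p q) (u + v)) : ℝ)
    _ ≤ 2 ^ #(Icc p q) * pairFreeDensity (v - u + 1).toNat :=
      card_sumAvoiding_le_of_Icc_subset (Icc_subset_Icc hu hv) _ rfl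
    _ ≤ 2 ^ #(Icc p q) * (3 / 4) ^ ((v - u + 1).toNat / 2) := by
      gcongr; exact pairFreeDensity_le_pow _
    _ ≤ 2 ^ #(Icc p q) * (3 / 4) ^ ((q - p + 1 - d).toNat / 2) := by
      gcongr ?_ * ?_
      exact pow_le_pow_of_le_one (by norm_num) (by norm_num) (by omega)

variable {L R : Finset ℤ} {n x y : ℤ}

lemma sum_card_sumAvoiding_Icc_le (hn : 1 ≤ n) (hpq : p + n ≤ q + 2) (hL : L ⊆ Icc (p - n) (p - 1))
    (hR : R ⊆ Icc (q + 1) (q + n)) (hx : x ≤ 2 * p - 1) (hy : 2 * q + 1 ≤ y) :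
    ∑ k ∈ Icc x y, (#(sumAvoiding (L ∪ R) (Icc p q) k) : ℝ) ≤
      (2 * p - 1 - x) * (2 ^ #(Icc p q) * 2 ^ (-(#{t ∈ L | t ≤ x - p} : ℤ))) +
      6 * (2 ^ #(Icc p q) * 2 ^ (-(#L : ℤ))) +
      (2 * n - 1) * (2 ^ #(Icc p q) * (3 / 4) ^ ((q - p + 2 - n).toNat / 2)) +
      6 * (2 ^ #(Icc p q) * 2 ^ (-(#R : ℤ))) +
      (y - 2 * q - 1) * (2 ^ #(Icc p q) * 2 ^ (-(#{t ∈ R | y - q ≤ t} : ℤ))) := by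
  have left_edge := sum_Icc_le_mul (x := x) (y := 2 * p - 2) (by omega) fun k hk =>
    card_sumAvoiding_le_of_image_sub_subset (T := {t ∈ L | t ≤ x - p}) (A := L ∪ R) (U := Icc p q)
      (k := k) (by grind) (by grind)
  have left_fringe := sum_card_sumAvoiding_le_of_left_fringe (A := L ∪ R) (q := q)
    subset_union_left hL (by omega)
  have centre := sum_Icc_le_mul (x := q + (p - n) + 1) (y := p + (q + n) - 1) (by omega)
    fun k hk => card_sumAvoiding_Icc_le (A := L ∪ R) (p := p) (q := q) (k := k) (d := n - 1)
      (by grind)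
  have right_fringe := sum_card_sumAvoiding_le_of_right_fringe (A := L ∪ R) (p := p)
    subset_union_right hR (by omega)
  have right_edge := sum_Icc_le_mul (x := 2 * q + 2) (y := y) (by omega) fun k hk =>
    card_sumAvoiding_le_of_image_sub_subset (T := {t ∈ R | y - q ≤ t}) (A := L ∪ R) (U := Icc p q)
      (k := k) (by grind) (by grind)
  have split (f : ℤ → ℝ) : ∑ k ∈ Icc x y, f k =
      ∑ k ∈ Icc x (2 * p - 2), f k + ∑ k ∈ Icc (2 * p - 1) (q + (p - n)), f k +
      ∑ k ∈ Icc (q + (p - n) + 1) (p + (q + n) - 1), f k +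
      ∑ k ∈ Icc (p + (q + n)) (2 * q + 1), f k + ∑ k ∈ Icc (2 * q + 2) y, f k := by
    rw [sum_Icc_add_sum_Icc, sum_Icc_add_sum_Icc, sum_Icc_add_sum_Icc, sum_Icc_add_sum_Icc] <;>
      omega
  rw [split]
  rw [show q - p + 1 - (n - 1) = q - p + 2 - n by ring] at centre
  push_cast at left_edge centre right_edge
  linarith

theorem le_card_filter_Icc_subset_add (hn : 1 ≤ n) (hpq : p + n ≤ q + 2)
    (hL : L ⊆ Icc (p - n) (p - 1)) (hR : R ⊆ Icc (q + 1) (q + n)) (hx : x ≤ 2 * p - 1)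
    (hy : 2 * q + 1 ≤ y) :
    (1 - (2 * p - 1 - x) * 2 ^ (-(#{t ∈ L | t ≤ x - p} : ℤ))
        - (y - 2 * q - 1) * 2 ^ (-(#{t ∈ R | y - q ≤ t} : ℤ))
        - 6 * (2 ^ (-(#L : ℤ)) + 2 ^ (-(#R : ℤ)))
        - (2 * n - 1) * (3 / 4) ^ ((q - p + 2 - n).toNat / 2)) * (2 : ℝ) ^ #(Icc p q) ≤
      #{M ∈ (Icc p q).powerset | Icc x y ⊆ (L ∪ M ∪ R) + (L ∪ M ∪ R)} := by
  have union_bound : (2 : ℝ) ^ #(Icc p q) ≤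
      #{M ∈ (Icc p q).powerset | Icc x y ⊆ (L ∪ R ∪ M) + (L ∪ R ∪ M)} +
        ∑ k ∈ Icc x y, (#(sumAvoiding (L ∪ R) (Icc p q) k) : ℝ) := by
    exact_mod_cast two_pow_card_le_card_add_sum_card_sumAvoiding (L ∪ R) (Icc p q) (Icc x y)
  simp only [union_right_comm L _ R]
  linarith [sum_card_sumAvoiding_Icc_le hn hpq hL hR hx hy]

end Fringes

theorem stmt17_general (l : ℤ) (hl : 1 ≤ l) (L R₀ : Finset ℤ) (hL : L ⊆ Icc 0 (l - 1))
    (hR₀ : R₀ ⊆ Icc 0 (l - 1)) (a : ℤ) (ha : 2 ≤ a) (ε : ℝ) (hε : 0 < ε) :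
    ∃ r₀ : ℤ, ∀ r : ℤ, r₀ ≤ r →
      (1 - ((a : ℝ) - 2) * ((2 : ℝ) ^ (-(#{i ∈ R₀ | a - 2 ≤ i} : ℤ))
              + (2 : ℝ) ^ (-(#{i ∈ L | i ≤ l - a + 1} : ℤ)))
          - 6 * ((2 : ℝ) ^ (-(#L : ℤ)) + (2 : ℝ) ^ (-(#R₀ : ℤ))) - ε) * (2 : ℝ) ^ (r - 2 * l) ≤
      #{M ∈ (Icc l (r - l - 1)).powerset | Icc (2 * l - a + 1) (2 * r - 2 * l + a - 3) ⊆
        (L ∪ M ∪ R₀.image (r - l + ·)) + (L ∪ M ∪ R₀.image (r - l + ·))} := by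
  have centre_tendsto := (tendsto_pow_atTop_nhds_zero_of_lt_one (r := (3 / 4 : ℝ)) (by norm_num)
    (by norm_num)).const_mul (2 * (l : ℝ) - 1)
  rw [mul_zero] at centre_tendsto
  obtain ⟨N, hN⟩ := Filter.eventually_atTop.1 (centre_tendsto.eventually_le_const hε)
  refine ⟨3 * l - 1 + 2 * N, fun r hr => ?_⟩
  have centre_le := hN ((r - l - 1 - l + 2 - l).toNat / 2) (by omega)
  have card_translate (T : Finset ℤ) : #(T.image (r - l + ·)) = #T :=
    card_image_of_injective _ (add_right_injective _)
  have filter_translate : {t ∈ R₀.image (r - l + ·) | 2 * r - 2 * l + a - 3 - (r - l - 1) ≤ t} =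
      {i ∈ R₀ | a - 2 ≤ i}.image (r - l + ·) := by
    rw [filter_image]
    exact congrArg _ (filter_congr fun i _ => by omega)
  have card_middle : (2 : ℝ) ^ (r - 2 * l) = 2 ^ #(Icc l (r - l - 1)) := by
    rw [← zpow_natCast, Int.card_Icc_of_le _ _ (by omega)]
    ring_nf
  have bound := le_card_filter_Icc_subset_add (L := L) (R := R₀.image (r - l + ·)) (n := l) (p := l)
    (q := r - l - 1) (x := 2 * l - a + 1) (y := 2 * r - 2 * l + a - 3) hl (by omega)
    (by rwa [sub_self]) (by grind) (by omega) (by omega)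
  rw [filter_translate, card_translate, card_translate,
    show 2 * l - a + 1 - l = l - a + 1 by ring] at bound
  rw [card_middle]
  refine (mul_le_mul_of_nonneg_right ?_ (by positivity)).trans bound
  push_cast
  linarith

theorem stmt17 (l : ℤ) (hl : 1 ≤ l) (L R₀ : Finset ℤ)
    (hL : L ⊆ Finset.Icc 0 (l - 1)) (hR₀ : R₀ ⊆ Finset.Icc 0 (l - 1))
    (a : ℤ) (ha : 2 ≤ a)
    (haL : Finset.Icc l (2 * l - a) ⊆ L + L)
    (haR : Finset.Icc (a - 2) (l - 2) ⊆ R₀ + R₀)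
    (ε : ℝ) (hε : 0 < ε) :
    ∃ r₀ : ℤ, ∀ r : ℤ, r₀ ≤ r →
      (1 - ((a : ℝ) - 2) * ((2 : ℝ) ^ (-(((R₀.filter (fun i => a - 2 ≤ i)).card : ℤ)))
              + (2 : ℝ) ^ (-(((L.filter (fun i => i ≤ l - a + 1)).card : ℤ))))
          - 6 * ((2 : ℝ) ^ (-(L.card : ℤ)) + (2 : ℝ) ^ (-(R₀.card : ℤ))) - ε)
          * (2 : ℝ) ^ (r - 2 * l) ≤
      (((Finset.Icc l (r - l - 1)).powerset.filter (fun M =>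
          Finset.Icc (2 * l - a + 1) (2 * r - 2 * l + a - 3) ⊆
            (L ∪ M ∪ R₀.image (fun x => (r - l) + x))
              + (L ∪ M ∪ R₀.image (fun x => (r - l) + x)))).card : ℝ) :=
  stmt17_general l hl L R₀ hL hR₀ a ha ε hε
end
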